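/- Let β ∈ ℂ with f(β) ≠ 0 and let θ ∈ ℝ be such that (i·e^{iθ})^N / f(β) is not a real number. Then for every r ∈ ℝ, the set {u ∈ ℝ : f((r + i·u)·e^{iθ}) / f(β) ∈ ℝ} is finite and has at most N elements. -/

import Mathlib

open Polynomial Complex Set

/-! On the real axis, `conj (p u)` is the value at `u` of the polynomial `p̄` with conjugate
coefficients, so `p u` is real exactly when `u` is a root of `p - p̄`, which has degree at most
`deg p`. Hence a line either lies in a level set `{z : f z / c ∈ ℝ}` or meets it in at most
`deg f` points, and it cannot lie in it when the leading coefficient of `f / c` along the line is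
not real. -/

section RealAxis

open scoped ComplexConjugate

variable {p : ℂ[X]}

lemma eval_ofReal_map_conj (p : ℂ[X]) (u : ℝ) :
    (p.map (starRingEnd ℂ)).eval (u : ℂ) = conj (p.eval (u : ℂ)) := by
  simpa only [conj_ofReal] using eval_map_apply (starRingEnd ℂ) (p := p) (u : ℂ)

lemma eval_ofReal_im_eq_zero_iff (u : ℝ) :
    (p.eval (u : ℂ)).im = 0 ↔ (p - p.map (starRingEnd ℂ)).IsRoot (u : ℂ) := by
  rw [IsRoot.def, eval_sub, eval_ofReal_map_conj, sub_eq_zero,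
    eq_comm (a := p.eval _), conj_eq_iff_im]

lemma finite_and_ncard_le_natDegree_of_exists_im_ne_zero (h : ∃ u : ℝ, (p.eval (u : ℂ)).im ≠ 0) :
    {u : ℝ | (p.eval (u : ℂ)).im = 0}.Finite ∧
      {u : ℝ | (p.eval (u : ℂ)).im = 0}.ncard ≤ p.natDegree := by
  let q := p - p.map (starRingEnd ℂ)
  have q_ne_zero : q ≠ 0 := by
    rintro (hq : p - p.map (starRingEnd ℂ) = 0)
    obtain ⟨u, hu⟩ := h
    rw [Ne, eval_ofReal_im_eq_zero_iff, hq] at hu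
    exact hu eval_zero
  have natDegree_q : q.natDegree ≤ p.natDegree :=
    (natDegree_sub_le_iff_left natDegree_map_le).mpr le_rfl
  have mapsTo : MapsTo ofReal {u : ℝ | (p.eval (u : ℂ)).im = 0} (q.rootSet ℂ) := fun u hu ↦ by
    rw [mem_rootSet_of_ne q_ne_zero, coe_aeval_eq_eval]
    exact (eval_ofReal_im_eq_zero_iff u).mp hu
  have finite_roots : (q.rootSet ℂ).Finite := q.rootSet_finite ℂ
  refine ⟨.of_injOn mapsTo ofReal_injective.injOn finite_roots, ?_⟩
  calc _ ≤ (q.rootSet ℂ).ncard :=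
        ncard_le_ncard_of_injOn _ mapsTo ofReal_injective.injOn finite_roots
    _ ≤ q.natDegree := ncard_rootSet_le q ℂ
    _ ≤ p.natDegree := natDegree_q

lemma exists_eval_ofReal_im_ne_zero_of_coeff {k : ℕ} (hk : (p.coeff k).im ≠ 0) :
    ∃ u : ℝ, (p.eval (u : ℂ)).im ≠ 0 := by
  by_contra! real_values
  have conj_eq : p.map (starRingEnd ℂ) = p :=
    eq_of_infinite_eval_eq _ _ <| (infinite_range_of_injective ofReal_injective).mono <| by
      rintro _ ⟨u, rfl⟩
      exact (eval_ofReal_map_conj p u).trans (conj_eq_iff_im.mpr (real_values u))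
  have coeff_eq : conj (p.coeff k) = p.coeff k := by rw [← coeff_map, conj_eq]
  exact hk (conj_eq_iff_im.mp coeff_eq)

end RealAxis

/-- The restriction `t ↦ f (a + t * b)` of `f` to the line through `a` in the direction `b`, as a
polynomial in the parameter `t`. -/
noncomputable def lineRestriction {R : Type*} [CommSemiring R] (f : R[X]) (a b : R) : R[X] :=
  (taylor a f).comp (C b * X)

section LineRestriction

variable {R : Type*} [CommSemiring R] (f : R[X]) (a b : R)

lemma eval_lineRestriction (t : R) : (lineRestriction f a b).eval t = f.eval (a + t * b) := by
  simp only [lineRestriction, eval_comp, eval_mul, eval_C, eval_X, taylor_eval, add_comm,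
    mul_comm]

lemma natDegree_lineRestriction_le : (lineRestriction f a b).natDegree ≤ f.natDegree :=
  calc _ ≤ (taylor a f).natDegree * (C b * X).natDegree := natDegree_comp_le
    _ ≤ f.natDegree * 1 := by
      rw [natDegree_taylor]
      gcongr
      exact (natDegree_C_mul_le b X).trans natDegree_X_le
    _ = f.natDegree := mul_one _

lemma coeff_natDegree_lineRestriction :
    (lineRestriction f a b).coeff f.natDegree = f.leadingCoeff * b ^ f.natDegree := by
  rw [lineRestriction, comp_C_mul_X_coeff, coeff_taylor_natDegree]

end LineRestriction

lemma exists_eval_line_div_im_ne_zero_of_leadingCoeff {f : ℂ[X]} {a b c : ℂ}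
    (h : (f.leadingCoeff * b ^ f.natDegree / c).im ≠ 0) :
    ∃ u : ℝ, (f.eval (a + u * b) / c).im ≠ 0 := by
  have hcoeff : ((C c⁻¹ * lineRestriction f a b).coeff f.natDegree).im ≠ 0 := by
    rwa [coeff_C_mul, coeff_natDegree_lineRestriction, ← div_eq_inv_mul]
  simpa only [eval_C_mul, eval_lineRestriction, ← div_eq_inv_mul] using
    exists_eval_ofReal_im_ne_zero_of_coeff hcoeff

theorem line_meets_level_set_in_at_most_N_points_general
    (f : ℂ[X]) (a b c : ℂ) (h : ∃ u : ℝ, (f.eval (a + u * b) / c).im ≠ 0) :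
    {u : ℝ | (f.eval (a + u * b) / c).im = 0}.Finite ∧
      {u : ℝ | (f.eval (a + u * b) / c).im = 0}.ncard ≤ f.natDegree := by
  set p := C c⁻¹ * lineRestriction f a b with hp
  have eval_p (u : ℝ) : f.eval (a + u * b) / c = p.eval (u : ℂ) := by
    rw [hp, eval_C_mul, eval_lineRestriction, div_eq_inv_mul]
  have natDegree_p : p.natDegree ≤ f.natDegree :=
    (natDegree_C_mul_le _ _).trans (natDegree_lineRestriction_le f a b)
  simp only [eval_p] at h ⊢
  exact (finite_and_ncard_le_natDegree_of_exists_im_ne_zero h).imp_right (·.trans natDegree_p)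

section Product

variable {ι R : Type*} [CommRing R] (t : Finset ι) (α : ι → R) (n : ι → ℕ)

lemma monic_prod_X_sub_C_pow : (∏ j ∈ t, (X - C (α j)) ^ n j).Monic :=
  monic_prod_of_monic _ _ fun j _ ↦ (monic_X_sub_C (α j)).pow (n j)

lemma natDegree_prod_X_sub_C_pow [Nontrivial R] :
    (∏ j ∈ t, (X - C (α j)) ^ n j).natDegree = ∑ j ∈ t, n j := by
  rw [natDegree_prod_of_monic _ _ fun j _ ↦ (monic_X_sub_C (α j)).pow (n j)]
  simp only [(monic_X_sub_C _).natDegree_pow, natDegree_X_sub_C, mul_one]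

end Product

/-- Provided `(i e^{iθ})^N / f(β)` is not real, every line
`D_{r,θ} = {(r + iu) e^{iθ} : u ∈ ℝ}` meets the level set
`{z : f z / f β ∈ ℝ}` in at most `N` points, i.e. for every `r` the set of
parameters `u` with `f((r + iu) e^{iθ}) / f(β)` real is finite of cardinality
at most `N`. -/
theorem line_meets_level_set_in_at_most_N_points
    (s : ℕ) (hs : 2 ≤ s)
    (α : Fin s → ℂ) (hα : Function.Injective α)
    (n : Fin s → ℕ) (hn : ∀ j, 1 ≤ n j)
    (N : ℕ) (hN : N = ∑ j, n j)
    (f : Polynomial ℂ) (hf : f = ∏ j, (X - C (α j)) ^ n j)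
    (β : ℂ) (hβ : f.eval β ≠ 0)
    (θ : ℝ) (hθ : ((Complex.I * Complex.exp (θ * Complex.I)) ^ N / f.eval β).im ≠ 0) :
    ∀ r : ℝ,
      {u : ℝ | (f.eval ((r + u * Complex.I) * Complex.exp (θ * Complex.I))
          / f.eval β).im = 0}.Finite ∧
      {u : ℝ | (f.eval ((r + u * Complex.I) * Complex.exp (θ * Complex.I))
          / f.eval β).im = 0}.ncard ≤ N := by
  intro r
  have monic_f : f.Monic := hf ▸ monic_prod_X_sub_C_pow _ α n
  have natDegree_f : f.natDegree = N := by rw [hf, hN, natDegree_prod_X_sub_C_pow]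
  set e := exp (θ * I)
  have point_eq (u : ℝ) : (r + u * I) * e = r * e + u * (I * e) := by ring
  simp only [point_eq, ← natDegree_f]
  refine line_meets_level_set_in_at_most_N_points_general f _ _ _ <|
    exists_eval_line_div_im_ne_zero_of_leadingCoeff ?_
  rwa [monic_f.leadingCoeff, one_mul, natDegree_f]
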